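/- Let h > 0 be a real number and let φ_n : [0, nh] → [0,∞), for n ≥ 1, be a sequence of bounded concave functions such that φ_{n+m} ≤ φ_n ⊗ φ_m for all n, m ≥ 1. Then for all integers k, n ≥ 1 and all x ∈ [0, kh], one has φ_{kn}(nx) ≤ n · φ_k(x). -/

import Mathlib

/-- The tropical convolution of `f : [0,h₁] → ℝ` and `g : [0,h₂] → ℝ`:
`(f ⊗ g)(x) = sup { f a + g b : 0 ≤ a ≤ h₁, 0 ≤ b ≤ h₂, a + b = x }`. -/
noncomputable def tropConv (h₁ h₂ : ℝ) (f g : ℝ → ℝ) : ℝ → ℝ := fun x =>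
  sSup {y | ∃ a b : ℝ, 0 ≤ a ∧ a ≤ h₁ ∧ 0 ≤ b ∧ b ≤ h₂ ∧ a + b = x ∧ y = f a + g b}

/-!
For concave `f` on `[0, H]`, the dilations `f_s : [0, s * H] → ℝ`, `f_s (s * x) = s * f x`, satisfy
`f_s ⊗ f_t ≤ f_{s + t}`: a splitting `(s + t) * x = s * y + t * z` exhibits `x` as the average of
`y` and `z` with weights proportional to `s` and `t`. Applied to `f = φ_k`, this propagates the
bound `φ_{kn} ≤ f_n` from `n` to `n + 1` through `φ_{kn+k} ≤ φ_{kn} ⊗ φ_k`.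
-/

theorem smul_map_add_smul_map_le_of_concaveOn {𝕜 E β : Type*} [Field 𝕜] [LinearOrder 𝕜]
    [IsStrictOrderedRing 𝕜] [AddCommMonoid E] [Module 𝕜 E] [AddCommMonoid β] [PartialOrder β]
    [Module 𝕜 β] [PosSMulMono 𝕜 β] {C : Set E} {f : E → β} (hf : ConcaveOn 𝕜 C f)
    {y z x : E} (hy : y ∈ C) (hz : z ∈ C) {s t : 𝕜} (hs : 0 ≤ s) (ht : 0 ≤ t) (hst : 0 < s + t)
    (hx : s • y + t • z = (s + t) • x) :
    s • f y + t • f z ≤ (s + t) • f x := by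
  have barycenter_eq : (s / (s + t)) • y + (t / (s + t)) • z = x := by
    rw [div_eq_inv_mul, div_eq_inv_mul, mul_smul, mul_smul, ← smul_add, hx,
      inv_smul_smul₀ hst.ne']
  have concave_le := (concaveOn_iff_div.mp hf).2 hy hz hs ht hst
  rw [barycenter_eq] at concave_le
  calc s • f y + t • f z
      = (s + t) • ((s / (s + t)) • f y + (t / (s + t)) • f z) := by
        rw [smul_add, smul_smul, smul_smul, mul_div_cancel₀ _ hst.ne', mul_div_cancel₀ _ hst.ne']
    _ ≤ (s + t) • f x := smul_le_smul_of_nonneg_left concave_le hst.le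

theorem tropConv_le {h₁ h₂ : ℝ} (hh₁ : 0 ≤ h₁) (hh₂ : 0 ≤ h₂) {f g : ℝ → ℝ} {x c : ℝ}
    (hx : x ∈ Set.Icc 0 (h₁ + h₂))
    (hc : ∀ a ∈ Set.Icc 0 h₁, ∀ b ∈ Set.Icc 0 h₂, a + b = x → f a + g b ≤ c) :
    tropConv h₁ h₂ f g x ≤ c := by
  apply csSup_le
  · have hsplit : x - min x h₁ ≤ h₂ := by
      rw [sub_le_comm]
      exact le_min (sub_le_self x hh₂) (sub_le_iff_le_add.mpr hx.2)
    exact ⟨_, min x h₁, x - min x h₁, le_min hx.1 hh₁, min_le_right x h₁,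
      sub_nonneg.mpr (min_le_left x h₁), hsplit, add_sub_cancel _ x, rfl⟩
  · rintro _ ⟨a, b, ha₀, ha₁, hb₀, hb₁, hab, rfl⟩
    exact hc a ⟨ha₀, ha₁⟩ b ⟨hb₀, hb₁⟩ hab

theorem tropConv_add_mul_le_of_concaveOn {H s t : ℝ} {f F G : ℝ → ℝ}
    (hf : ConcaveOn ℝ (Set.Icc 0 H) f) (hs : 0 < s) (ht : 0 < t)
    (hF : ∀ y ∈ Set.Icc 0 H, F (s * y) ≤ s * f y)
    (hG : ∀ z ∈ Set.Icc 0 H, G (t * z) ≤ t * f z) {x : ℝ} (hx : x ∈ Set.Icc 0 H) :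
    tropConv (s * H) (t * H) F G ((s + t) * x) ≤ (s + t) * f x := by
  have hH : 0 ≤ H := hx.1.trans hx.2
  have exists_eq_mul {r : ℝ} (hr : 0 < r) {a : ℝ} (ha : a ∈ Set.Icc 0 (r * H)) :
      ∃ y ∈ Set.Icc 0 H, a = r * y :=
    ⟨a / r, ⟨div_nonneg ha.1 hr.le, (div_le_iff₀' hr).mpr ha.2⟩, (mul_div_cancel₀ a hr.ne').symm⟩
  have hstx : (s + t) * x ∈ Set.Icc 0 (s * H + t * H) := by
    rw [← add_mul]
    exact ⟨mul_nonneg (by positivity) hx.1, mul_le_mul_of_nonneg_left hx.2 (by positivity)⟩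
  refine tropConv_le (by positivity) (by positivity) hstx fun a ha b hb hab ↦ ?_
  obtain ⟨y, hy, rfl⟩ := exists_eq_mul hs ha
  obtain ⟨z, hz, rfl⟩ := exists_eq_mul ht hb
  calc F (s * y) + G (t * z)
      ≤ s * f y + t * f z := add_le_add (hF y hy) (hG z hz)
    _ ≤ (s + t) * f x :=
        smul_map_add_smul_map_le_of_concaveOn hf hy hz hs.le ht.le (by positivity) hab

theorem phi_mul_le_general {h : ℝ} {φ : ℕ → ℝ → ℝ} {k : ℕ} (hk : 1 ≤ k)
    (hconc : ConcaveOn ℝ (Set.Icc 0 ((k : ℝ) * h)) (φ k))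
    (hsub : ∀ n : ℕ, 1 ≤ n → ∀ x ∈ Set.Icc (0 : ℝ) (((n : ℝ) + (k : ℝ)) * h),
      φ (n + k) x ≤ tropConv ((n : ℝ) * h) ((k : ℝ) * h) (φ n) (φ k) x)
    {n : ℕ} (hn : 1 ≤ n) {x : ℝ} (hx : x ∈ Set.Icc (0 : ℝ) ((k : ℝ) * h)) :
    φ (k * n) ((n : ℝ) * x) ≤ (n : ℝ) * φ k x := by
  induction n, hn using Nat.le_induction generalizing x with
  | base => simp
  | succ n hn ih =>
    have hmem : ((n : ℝ) + 1) * x ∈ Set.Icc 0 ((((k * n : ℕ) : ℝ) + k) * h) := by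
      refine ⟨mul_nonneg (by positivity) hx.1, ?_⟩
      calc ((n : ℝ) + 1) * x ≤ (n + 1) * (k * h) :=
            mul_le_mul_of_nonneg_left hx.2 (by positivity)
        _ = (((k * n : ℕ) : ℝ) + k) * h := by push_cast; ring
    have hlength : ((k * n : ℕ) : ℝ) * h = n * (k * h) := by push_cast; ring
    rw [Nat.mul_succ, Nat.cast_succ]
    calc φ (k * n + k) ((n + 1) * x)
        ≤ tropConv ((k * n : ℕ) * h) (k * h) (φ (k * n)) (φ k) ((n + 1) * x) :=
          hsub (k * n) (Nat.mul_pos hk hn) _ hmem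
      _ = tropConv (n * (k * h)) (1 * (k * h)) (φ (k * n)) (φ k) ((n + 1) * x) := by
          rw [hlength, one_mul]
      _ ≤ (n + 1) * φ k x :=
          tropConv_add_mul_le_of_concaveOn hconc (Nat.cast_pos.mpr hn) one_pos
            (fun _ hy ↦ ih hy) (fun z _ ↦ by rw [one_mul, one_mul]) hx

/-- For a sequence of bounded concave nonnegative functions `φ_n : [0, nh] → [0,∞)`
satisfying `φ_{n+m} ≤ φ_n ⊗ φ_m`, one has `φ_{kn}(nx) ≤ n · φ_k(x)` for all
`k, n ≥ 1` and `x ∈ [0, kh]`. -/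
theorem phi_mul_le (h : ℝ) (hh : 0 < h) (φ : ℕ → ℝ → ℝ)
    (hconc : ∀ n : ℕ, 1 ≤ n → ConcaveOn ℝ (Set.Icc 0 ((n : ℝ) * h)) (φ n))
    (hnonneg : ∀ n : ℕ, 1 ≤ n → ∀ x ∈ Set.Icc (0 : ℝ) ((n : ℝ) * h), 0 ≤ φ n x)
    (hbdd : ∀ n : ℕ, 1 ≤ n → ∃ C : ℝ, ∀ x ∈ Set.Icc (0 : ℝ) ((n : ℝ) * h), φ n x ≤ C)
    (hsub : ∀ n : ℕ, 1 ≤ n → ∀ m : ℕ, 1 ≤ m →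
      ∀ x ∈ Set.Icc (0 : ℝ) (((n : ℝ) + (m : ℝ)) * h),
        φ (n + m) x ≤ tropConv ((n : ℝ) * h) ((m : ℝ) * h) (φ n) (φ m) x) :
    ∀ k : ℕ, 1 ≤ k → ∀ n : ℕ, 1 ≤ n → ∀ x ∈ Set.Icc (0 : ℝ) ((k : ℝ) * h),
      φ (k * n) ((n : ℝ) * x) ≤ (n : ℝ) * φ k x := by
  exact fun k hk n hn x hx ↦
    phi_mul_le_general hk (hconc k hk) (fun m hm ↦ hsub m hm k hk) hn hx
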